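/- Let γ ∈ (0,1), β > max(1 − 2γ, 0), and α > 1/γ, and set S = [⌊N log^{−α} N⌋]. Then there exist ε ∈ (0,1) and C > 0 such that, with probability tending to 1 as N → ∞, simultaneously every pair of vertices s, t ∈ S is connected in the Simplified Norros–Reittu graph G_N by a path of length at most C log N all of whose vertices other than s and t lie in L_ε = [N] ∖ [⌊εN⌋]. -/

import Mathlib

open scoped Classical
open Filter

noncomputable section

/-- Edge probability of the Simplified Norros–Reittu graph between (1-based) vertices
`i` and `j` of `[N]`: `1 - exp(-β N^(2γ-1) i^(-γ) j^(-γ))`. -/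
def snrEdgeProb (β γ : ℝ) (N i j : ℕ) : ℝ :=
  1 - Real.exp (-(β * (N : ℝ) ^ (2 * γ - 1) * (i : ℝ) ^ (-γ) * (j : ℝ) ^ (-γ)))

/-- Probability weight of a given simple graph on `[N]` when each edge `{i,j}` (`i ≠ j`)
is present independently with probability `p i j` (indices 1-based). -/
def graphWeight (p : ℕ → ℕ → ℝ) (N : ℕ) (G : SimpleGraph (Fin N)) : ℝ :=
  ∏ i : Fin N, ∏ j : Fin N,
    if i < j then
      (if G.Adj i j then p ((i : ℕ) + 1) ((j : ℕ) + 1)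
       else 1 - p ((i : ℕ) + 1) ((j : ℕ) + 1))
    else 1

/-- Probability that the random graph with independent edge probabilities `p` satisfies the
property `A`. -/
def graphProb (p : ℕ → ℕ → ℝ) (N : ℕ) (A : SimpleGraph (Fin N) → Prop) : ℝ :=
  ∑ G : SimpleGraph (Fin N), if A G then graphWeight p N G else 0

/-- Probability that the Simplified Norros–Reittu graph `G_N` satisfies the property `A`. -/
def snrProb (β γ : ℝ) (N : ℕ) (A : SimpleGraph (Fin N) → Prop) : ℝ :=
  graphProb (snrEdgeProb β γ N) N A

def Ex (p : ℕ → ℕ → ℝ) (N : ℕ) (f : SimpleGraph (Fin N) → ℝ) : ℝ :=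
  ∑ G : SimpleGraph (Fin N), graphWeight p N G * f G

def ind (P : Prop) : ℝ := if P then 1 else 0

lemma ind_nonneg (P : Prop) : 0 ≤ ind P := by unfold ind; split_ifs <;> norm_num
lemma ind_le_one (P : Prop) : ind P ≤ 1 := by unfold ind; split_ifs <;> norm_num
lemma ind_true {P : Prop} (h : P) : ind P = 1 := by simp [ind, h]
lemma ind_false {P : Prop} (h : ¬ P) : ind P = 0 := by simp [ind, h]

def DepE {N : ℕ} {β : Type*} (f : SimpleGraph (Fin N) → β) (P : Fin N → Fin N → Prop) : Prop :=
  ∀ G G' : SimpleGraph (Fin N), (∀ u v, P u v → (G.Adj u v ↔ G'.Adj u v)) → f G = f G'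

lemma graphProb_eq (p : ℕ → ℕ → ℝ) (N : ℕ) (A : SimpleGraph (Fin N) → Prop) :
    graphProb p N A = Ex p N (fun G => ind (A G)) := by
  unfold graphProb Ex ind
  refine Finset.sum_congr rfl fun G _ => ?_
  by_cases h : A G <;> simp [h]

def graphEquiv (N : ℕ) :
    SimpleGraph (Fin N) ≃ ({e : Fin N × Fin N // e.1 < e.2} → Bool) where
  toFun G e := decide (G.Adj e.1.1 e.1.2)
  invFun ω :=
    { Adj := fun i j => (∃ h : i < j, ω ⟨(i, j), h⟩ = true) ∨ (∃ h : j < i, ω ⟨(j, i), h⟩ = true)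
      symm := ⟨fun i j h => h.symm⟩
      loopless := ⟨fun i h => by rcases h with ⟨h, _⟩ | ⟨h, _⟩ <;> exact lt_irrefl _ h⟩ }
  left_inv G := by
    ext i j
    simp only [decide_eq_true_eq]
    constructor
    · rintro (⟨_, h⟩ | ⟨_, h⟩)
      · exact h
      · exact h.symm
    · intro h
      rcases lt_trichotomy i j with h1 | h1 | h1
      · exact Or.inl ⟨h1, h⟩
      · exact absurd h1 h.ne
      · exact Or.inr ⟨h1, h.symm⟩
  right_inv ω := by
    funext ⟨⟨i, j⟩, h⟩
    have h' : ¬ j < i := not_lt.mpr (le_of_lt h)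
    have h0 : i < j := h
    simp [h', h0]

lemma graphWeight_eq (p : ℕ → ℕ → ℝ) (N : ℕ) (G : SimpleGraph (Fin N)) :
    graphWeight p N G = ∏ e : {e : Fin N × Fin N // e.1 < e.2},
      (if graphEquiv N G e = true then p ((e.1.1 : ℕ) + 1) ((e.1.2 : ℕ) + 1)
        else 1 - p ((e.1.1 : ℕ) + 1) ((e.1.2 : ℕ) + 1)) := by
  unfold graphWeight
  rw [← Fintype.prod_prod_type', ← Finset.prod_filter]
  rw [Finset.prod_subtype (p := fun e : Fin N × Fin N => e.1 < e.2) _ (by simp)]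
  refine Finset.prod_congr rfl fun e _ => ?_
  simp [graphEquiv]

lemma Ex_one (p : ℕ → ℕ → ℝ) (N : ℕ) : Ex p N (fun _ => 1) = 1 := by
  unfold Ex
  simp only [mul_one, graphWeight_eq]
  rw [Equiv.sum_comp (graphEquiv N) (fun ω => ∏ e : {e : Fin N × Fin N // e.1 < e.2},
      (if ω e = true then p ((e.1.1 : ℕ) + 1) ((e.1.2 : ℕ) + 1)
        else 1 - p ((e.1.1 : ℕ) + 1) ((e.1.2 : ℕ) + 1)))]
  have := Finset.prod_univ_sum (fun _ : {e : Fin N × Fin N // e.1 < e.2} => (Finset.univ : Finset Bool))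
    (fun e b => (if b = true then p ((e.1.1 : ℕ) + 1) ((e.1.2 : ℕ) + 1)
        else 1 - p ((e.1.1 : ℕ) + 1) ((e.1.2 : ℕ) + 1)))
  rw [Fintype.piFinset_univ] at this
  rw [← this]
  simp

def mixG {N : ℕ} (P : Fin N → Fin N → Prop) (hP : ∀ u v, P u v → P v u)
    (G G' : SimpleGraph (Fin N)) : SimpleGraph (Fin N) where
  Adj u v := if P u v then G.Adj u v else G'.Adj u v
  symm := ⟨fun u v h => by
    by_cases h1 : P u v
    · have h2 := hP _ _ h1
      simp only [h1, h2, if_true] at h ⊢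
      exact h.symm
    · have h2 : ¬ P v u := fun h => h1 (hP _ _ h)
      simp only [h1, h2, if_false] at h ⊢
      exact h.symm⟩
  loopless := ⟨fun u h => by
    by_cases h1 : P u u <;> simp [h1] at h⟩

lemma mixG_mixG {N : ℕ} (P : Fin N → Fin N → Prop) (hP : ∀ u v, P u v → P v u)
    (G G' : SimpleGraph (Fin N)) : mixG P hP (mixG P hP G G') (mixG P hP G' G) = G := by
  ext u v
  by_cases h : P u v <;> simp [mixG, h]

lemma mixG_weight (p : ℕ → ℕ → ℝ) {N : ℕ} (P : Fin N → Fin N → Prop) (hP : ∀ u v, P u v → P v u)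
    (G G' : SimpleGraph (Fin N)) :
    graphWeight p N (mixG P hP G G') * graphWeight p N (mixG P hP G' G)
      = graphWeight p N G * graphWeight p N G' := by
  unfold graphWeight
  rw [← Finset.prod_mul_distrib, ← Finset.prod_mul_distrib]
  refine Finset.prod_congr rfl fun i _ => ?_
  rw [← Finset.prod_mul_distrib, ← Finset.prod_mul_distrib]
  refine Finset.prod_congr rfl fun j _ => ?_
  by_cases h : P i j
  · simp [mixG, h]
  · simp only [mixG, h, if_false]
    rw [mul_comm]

lemma Ex_indep (p : ℕ → ℕ → ℝ) {N : ℕ} (P Q : Fin N → Fin N → Prop) (hP : ∀ u v, P u v → P v u)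
    (hPQ : ∀ u v, P u v → ¬ Q u v) (f g : SimpleGraph (Fin N) → ℝ)
    (hf : DepE f P) (hg : DepE g Q) :
    Ex p N (fun G => f G * g G) = Ex p N f * Ex p N g := by
  have h1 : Ex p N (fun G => f G * g G) = Ex p N (fun G => f G * g G) * Ex p N (fun _ => 1) := by
    rw [Ex_one, mul_one]
  rw [h1]
  unfold Ex
  rw [Finset.sum_mul_sum, Finset.sum_mul_sum, ← Fintype.sum_prod_type', ← Fintype.sum_prod_type']
  symm
  refine Finset.sum_bij' (fun x _ => (mixG P hP x.1 x.2, mixG P hP x.2 x.1))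
    (fun x _ => (mixG P hP x.1 x.2, mixG P hP x.2 x.1)) (by simp) (by simp) ?_ ?_ ?_
  · intro x _
    simp only [mixG_mixG]
  · intro x _
    simp only [mixG_mixG]
  · rintro ⟨G, G'⟩ _
    have e1 : f (mixG P hP G G') = f G := hf _ _ fun u v h => by simp [mixG, h]
    have e2 : g (mixG P hP G G') = g G' := hg _ _ fun u v h => by
      have : ¬ P u v := fun h' => hPQ _ _ h' h
      simp [mixG, this]
    simp only [e1, e2, mul_one]
    have := mixG_weight p P hP G G'
    linear_combination (-(f G * g G')) * this

lemma Ex_nonadj (p : ℕ → ℕ → ℝ) (hp : ∀ i j, p i j = p j i) {N : ℕ} (a u : Fin N) (h : a ≠ u) :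
    Ex p N (fun G => ind (¬ G.Adj a u)) = 1 - p ((a : ℕ) + 1) ((u : ℕ) + 1) := by
  wlog hlt : a < u generalizing a u
  · have := this u a h.symm (lt_of_le_of_ne (not_lt.mp hlt) h.symm)
    rw [hp, ← this]
    simp only [SimpleGraph.adj_comm]
  let q : ℕ → ℕ → ℝ := fun i j => if i = (a : ℕ) + 1 ∧ j = (u : ℕ) + 1 then 0 else p i j
  have h0 : 1 - p ((a : ℕ) + 1) ((u : ℕ) + 1) =
      (1 - p ((a : ℕ) + 1) ((u : ℕ) + 1)) * Ex q N (fun _ => 1) := by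
    rw [Ex_one, mul_one]
  rw [h0]
  unfold Ex
  rw [Finset.mul_sum]
  refine Finset.sum_congr rfl fun G _ => ?_
  rw [mul_one, graphWeight_eq, graphWeight_eq]
  let e0 : {e : Fin N × Fin N // e.1 < e.2} := ⟨(a, u), hlt⟩
  rw [← Finset.mul_prod_erase _ _ (Finset.mem_univ e0),
    ← Finset.mul_prod_erase (a := e0) _ (fun e => if graphEquiv N G e = true then
      q ((e.1.1 : ℕ) + 1) ((e.1.2 : ℕ) + 1)
        else 1 - q ((e.1.1 : ℕ) + 1) ((e.1.2 : ℕ) + 1)) (Finset.mem_univ e0)]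
  have hpr : ∀ e ∈ Finset.univ.erase e0, q ((e.1.1 : ℕ) + 1) ((e.1.2 : ℕ) + 1)
      = p ((e.1.1 : ℕ) + 1) ((e.1.2 : ℕ) + 1) := by
    rintro ⟨⟨i, j⟩, hij⟩ he
    have hne := Finset.ne_of_mem_erase he
    simp only [q]
    rw [if_neg]
    rintro ⟨h1, h2⟩
    apply hne
    simp only [e0, Subtype.mk.injEq, Prod.mk.injEq]
    exact ⟨Fin.ext (by simpa using h1), Fin.ext (by simpa using h2)⟩
  have hpr2 : (∏ e ∈ Finset.univ.erase e0, (if graphEquiv N G e = true then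
      q ((e.1.1 : ℕ) + 1) ((e.1.2 : ℕ) + 1)
        else 1 - q ((e.1.1 : ℕ) + 1) ((e.1.2 : ℕ) + 1))) =
      ∏ e ∈ Finset.univ.erase e0, (if graphEquiv N G e = true then
      p ((e.1.1 : ℕ) + 1) ((e.1.2 : ℕ) + 1)
        else 1 - p ((e.1.1 : ℕ) + 1) ((e.1.2 : ℕ) + 1)) :=
    Finset.prod_congr rfl fun e he => by rw [hpr e he]
  rw [hpr2]
  have hq : q ((a : ℕ) + 1) ((u : ℕ) + 1) = 0 := by simp [q]
  by_cases hG : G.Adj a u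
  · have : graphEquiv N G e0 = true := by simp [graphEquiv, e0, hG]
    simp [this, ind, hG, e0, hq]
  · have : ¬ graphEquiv N G e0 = true := by simp [graphEquiv, e0, hG]
    simp only [this, ind, hG, e0, hq]
    simp

/-! ### basic expectation facts -/

lemma graphWeight_nonneg (p : ℕ → ℕ → ℝ) (hp0 : ∀ i j, 0 ≤ p i j) (hp1 : ∀ i j, p i j ≤ 1)
    (N : ℕ) (G : SimpleGraph (Fin N)) : 0 ≤ graphWeight p N G := by
  unfold graphWeight
  refine Finset.prod_nonneg fun i _ => Finset.prod_nonneg fun j _ => ?_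
  split_ifs
  · exact hp0 _ _
  · linarith [hp1 ((i : ℕ) + 1) ((j : ℕ) + 1)]
  · norm_num

lemma Ex_mono (p : ℕ → ℕ → ℝ) (hp0 : ∀ i j, 0 ≤ p i j) (hp1 : ∀ i j, p i j ≤ 1)
    {N : ℕ} {f g : SimpleGraph (Fin N) → ℝ} (h : ∀ G, f G ≤ g G) : Ex p N f ≤ Ex p N g :=
  Finset.sum_le_sum fun G _ => mul_le_mul_of_nonneg_left (h G) (graphWeight_nonneg p hp0 hp1 N G)

lemma Ex_nonneg (p : ℕ → ℕ → ℝ) (hp0 : ∀ i j, 0 ≤ p i j) (hp1 : ∀ i j, p i j ≤ 1)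
    {N : ℕ} {f : SimpleGraph (Fin N) → ℝ} (h : ∀ G, 0 ≤ f G) : 0 ≤ Ex p N f :=
  Finset.sum_nonneg fun G _ => mul_nonneg (graphWeight_nonneg p hp0 hp1 N G) (h G)

lemma Ex_sum (p : ℕ → ℕ → ℝ) {N : ℕ} {ι : Type*} (s : Finset ι)
    (f : ι → SimpleGraph (Fin N) → ℝ) :
    Ex p N (fun G => ∑ i ∈ s, f i G) = ∑ i ∈ s, Ex p N (f i) := by
  unfold Ex
  simp only [Finset.mul_sum]
  rw [Finset.sum_comm]

lemma Ex_add (p : ℕ → ℕ → ℝ) {N : ℕ} (f g : SimpleGraph (Fin N) → ℝ) :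
    Ex p N (fun G => f G + g G) = Ex p N f + Ex p N g := by
  unfold Ex
  simp only [mul_add, Finset.sum_add_distrib]

lemma Ex_mul_const (p : ℕ → ℕ → ℝ) {N : ℕ} (f : SimpleGraph (Fin N) → ℝ) (c : ℝ) :
    Ex p N (fun G => f G * c) = Ex p N f * c := by
  unfold Ex
  rw [Finset.sum_mul]
  exact Finset.sum_congr rfl fun G _ => by ring

lemma Ex_const (p : ℕ → ℕ → ℝ) (N : ℕ) (c : ℝ) : Ex p N (fun _ => c) = c := by
  have := Ex_mul_const p (N := N) (fun _ => 1) c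
  simpa [Ex_one] using this

lemma Ex_cond (p : ℕ → ℕ → ℝ) (hp0 : ∀ i j, 0 ≤ p i j) (hp1 : ∀ i j, p i j ≤ 1)
    {N : ℕ} (P Q : Fin N → Fin N → Prop) (hP : ∀ u v, P u v → P v u)
    (hPQ : ∀ u v, P u v → ¬ Q u v) {β : Type*} (T : Finset β)
    (Z : SimpleGraph (Fin N) → β) (hZT : ∀ G, Z G ∈ T) (hZ : DepE Z P)
    (h : β → SimpleGraph (Fin N) → ℝ) (hh : ∀ b ∈ T, DepE (h b) Q)
    (g : β → ℝ) (hg : ∀ b ∈ T, Ex p N (h b) ≤ g b) :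
    Ex p N (fun G => h (Z G) G) ≤ Ex p N (fun G => g (Z G)) := by
  have e1 : ∀ k : β → SimpleGraph (Fin N) → ℝ, (fun G => k (Z G) G) =
      fun G => ∑ b ∈ T, ind (Z G = b) * k b G := by
    intro k
    funext G
    rw [Finset.sum_eq_single (Z G)]
    · simp [ind]
    · intro b _ hb
      simp [ind, hb.symm]
    · intro h
      exact absurd (hZT G) h
  rw [e1 h, e1 (fun b _ => g b), Ex_sum, Ex_sum]
  refine Finset.sum_le_sum fun b hb => ?_
  rw [Ex_mul_const, Ex_indep p P Q hP hPQ _ _ _ (hh b hb)]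
  · exact mul_le_mul_of_nonneg_left (hg b hb) (Ex_nonneg p hp0 hp1 fun G => ind_nonneg _)
  · intro G G' hGG
    simp only
    rw [hZ G G' hGG]

/-- edges between `u` and `A` -/
def EBtw {N : ℕ} (A U : Finset (Fin N)) (u v : Fin N) : Prop :=
  (u ∈ A ∧ v ∈ U) ∨ (u ∈ U ∧ v ∈ A)

lemma EBtw_symm {N : ℕ} (A U : Finset (Fin N)) (u v : Fin N) : EBtw A U u v → EBtw A U v u := by
  unfold EBtw; tauto

lemma Ex_prod (p : ℕ → ℕ → ℝ) {N : ℕ} (A U : Finset (Fin N)) (hAU : Disjoint A U)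
    (f : Fin N → SimpleGraph (Fin N) → ℝ) (hf : ∀ u ∈ U, DepE (f u) (EBtw A {u})) :
    Ex p N (fun G => ∏ u ∈ U, f u G) = ∏ u ∈ U, Ex p N (f u) := by
  induction U using Finset.induction_on with
  | empty => simp [Ex_one]
  | insert a s ha ih =>
    simp only [Finset.prod_insert ha]
    rw [Finset.disjoint_insert_right] at hAU
    rw [Ex_indep p (EBtw A {a}) (EBtw A s) (EBtw_symm _ _), ih hAU.2]
    · intro u hu
      exact hf u (Finset.mem_insert_of_mem hu)
    · intro u v h1 h2
      have hd := Finset.disjoint_left.mp hAU.2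
      simp only [EBtw, Finset.mem_singleton] at h1 h2
      rcases h1 with ⟨h1, rfl⟩ | ⟨rfl, h1⟩ <;> rcases h2 with ⟨h2, h3⟩ | ⟨h2, h3⟩
      · exact ha h3
      · exact hAU.1 h3
      · exact hAU.1 h2
      · exact ha h2
    · exact hf a (Finset.mem_insert_self _ _)
    · intro G G' h
      refine Finset.prod_congr rfl fun u hu => ?_
      refine hf u (Finset.mem_insert_of_mem hu) G G' fun x y hxy => h x y ?_
      simp only [EBtw, Finset.mem_singleton] at hxy ⊢
      rcases hxy with ⟨h1, rfl⟩ | ⟨rfl, h1⟩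
      · exact Or.inl ⟨h1, hu⟩
      · exact Or.inr ⟨hu, h1⟩

lemma Ex_noadj_set (p : ℕ → ℕ → ℝ) (hp : ∀ i j, p i j = p j i) {N : ℕ} (A : Finset (Fin N))
    (u : Fin N) (hu : u ∉ A) :
    Ex p N (fun G => ind (¬ ∃ a ∈ A, G.Adj a u)) = ∏ a ∈ A, (1 - p ((a : ℕ) + 1) ((u : ℕ) + 1)) := by
  have e1 : (fun G : SimpleGraph (Fin N) => ind (¬ ∃ a ∈ A, G.Adj a u)) =
      fun G => ∏ a ∈ A, ind (¬ G.Adj a u) := by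
    funext G
    by_cases h : ∃ a ∈ A, G.Adj a u
    · obtain ⟨a, ha, h1⟩ := h
      rw [ind_false (by push Not; exact ⟨a, ha, h1⟩)]
      symm
      exact Finset.prod_eq_zero ha (ind_false (by simpa using h1))
    · rw [ind_true h]
      symm
      refine Finset.prod_eq_one fun a ha => ind_true fun h1 => h ⟨a, ha, h1⟩
  rw [e1, Ex_prod p {u} A (by simpa using hu)]
  · refine Finset.prod_congr rfl fun a ha => Ex_nonadj p hp a u ?_
    rintro rfl
    exact hu ha
  · intro a ha G G' h
    simp only
    rw [h a u (by simp [EBtw])]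

def nbS {N : ℕ} (G : SimpleGraph (Fin N)) (A U : Finset (Fin N)) : Finset (Fin N) :=
  U.filter (fun u => ∃ a ∈ A, G.Adj a u)

def remS {N : ℕ} (G : SimpleGraph (Fin N)) : ℕ → Finset (Fin N) → Finset (Fin N) → Finset (Fin N)
  | 0, _, U => U
  | k + 1, A, U => remS G k (nbS G A U) (U \ nbS G A U)

lemma nbS_subset {N : ℕ} (G : SimpleGraph (Fin N)) (A U : Finset (Fin N)) : nbS G A U ⊆ U :=
  Finset.filter_subset _ _

lemma remS_subset {N : ℕ} (G : SimpleGraph (Fin N)) (k : ℕ) :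
    ∀ A U : Finset (Fin N), remS G k A U ⊆ U := by
  induction k with
  | zero => intro A U; exact Finset.Subset.refl _
  | succ k ih =>
    intro A U
    exact (ih _ _).trans Finset.sdiff_subset

lemma nbS_dep {N : ℕ} (A U : Finset (Fin N)) :
    DepE (fun G : SimpleGraph (Fin N) => nbS G A U) (EBtw A U) := by
  intro G G' h
  unfold nbS
  refine Finset.filter_congr fun u hu => ?_
  refine exists_congr fun a => and_congr_right fun ha => h a u (Or.inl ⟨ha, hu⟩)

lemma remS_congr {N : ℕ} (G G' : SimpleGraph (Fin N)) (k : ℕ) :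
    ∀ A U : Finset (Fin N), (∀ u v, u ∈ A ∪ U → v ∈ U → (G.Adj u v ↔ G'.Adj u v)) →
      remS G k A U = remS G' k A U := by
  induction k with
  | zero => intro A U _; rfl
  | succ k ih =>
    intro A U h
    have e : nbS G A U = nbS G' A U := by
      unfold nbS
      refine Finset.filter_congr fun u hu => ?_
      exact exists_congr fun a => and_congr_right fun ha =>
        h a u (Finset.mem_union_left _ ha) hu
    unfold remS
    rw [e]
    refine ih _ _ fun u v hu hv => h u v ?_ (Finset.mem_sdiff.mp hv).1
    refine Finset.mem_union_right _ ?_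
    rcases Finset.mem_union.mp hu with hu | hu
    · exact nbS_subset _ _ _ hu
    · exact (Finset.mem_sdiff.mp hu).1

lemma remS_walk {N : ℕ} (G : SimpleGraph (Fin N)) (k : ℕ) :
    ∀ (A U : Finset (Fin N)) (v : Fin N), v ∈ U → v ∉ remS G k A U →
      ∃ a ∈ A, ∃ q : G.Walk a v, q.length ≤ k ∧ ∀ x ∈ q.support, x = a ∨ x ∈ U := by
  induction k with
  | zero => intro A U v h1 h2; exact absurd h1 h2
  | succ k ih =>
    intro A U v h1 h2
    by_cases hv : v ∈ nbS G A U
    · obtain ⟨_, a, ha, hav⟩ := Finset.mem_filter.mp hv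
      refine ⟨a, ha, SimpleGraph.Walk.cons hav SimpleGraph.Walk.nil, by simp, ?_⟩
      intro x hx
      simp at hx
      rcases hx with rfl | rfl
      · exact Or.inl rfl
      · exact Or.inr h1
    · obtain ⟨b, hb, q, hq, hs⟩ := ih (nbS G A U) (U \ nbS G A U) v
        (Finset.mem_sdiff.mpr ⟨h1, hv⟩) h2
      obtain ⟨hbU, a, ha, hab⟩ := Finset.mem_filter.mp hb
      refine ⟨a, ha, SimpleGraph.Walk.cons hab q, by simpa using hq, ?_⟩
      intro x hx
      rw [SimpleGraph.Walk.support_cons, List.mem_cons] at hx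
      rcases hx with rfl | hx
      · exact Or.inl rfl
      · rcases hs x hx with rfl | h
        · exact Or.inr hbU
        · exact Or.inr (Finset.mem_sdiff.mp h).1

lemma one_sub_exp_ge (x y : ℝ) (hx : 0 ≤ x) (hxy : x ≤ y) : x / (1 + y) ≤ 1 - Real.exp (-x) := by
  have h1 : Real.exp (-x) ≤ 1 / (1 + x) := by
    rw [Real.exp_neg, ← one_div]
    exact one_div_le_one_div_of_le (by linarith) (by linarith [Real.add_one_le_exp x])
  have h2 : x / (1 + y) ≤ x / (1 + x) := by
    apply div_le_div_of_nonneg_left hx <;> linarith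
  have h3 : x / (1 + x) = 1 - 1 / (1 + x) := by field_simp; ring
  linarith

lemma noadj_exp (p : ℕ → ℕ → ℝ) (hp : ∀ i j, p i j = p j i) {N : ℕ} (w : Fin N → ℝ) (κ : ℝ)
    (hpw : ∀ a u : Fin N, 1 - p ((a : ℕ) + 1) ((u : ℕ) + 1) = Real.exp (-(κ * w a * w u)))
    (A : Finset (Fin N)) (u : Fin N) (hu : u ∉ A) :
    Ex p N (fun G => ind (¬ ∃ a ∈ A, G.Adj a u)) = Real.exp (-(κ * w u * ∑ a ∈ A, w a)) := by
  rw [Ex_noadj_set p hp A u hu]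
  simp only [hpw]
  rw [← Real.exp_sum, Finset.mul_sum, ← Finset.sum_neg_distrib]
  congr 1
  exact Finset.sum_congr rfl fun a _ => by ring

lemma Ex_ind_not (p : ℕ → ℕ → ℝ) {N : ℕ} (A : SimpleGraph (Fin N) → Prop) :
    Ex p N (fun G => ind (A G)) = 1 - Ex p N (fun G => ind (¬ A G)) := by
  rw [eq_sub_iff_add_eq, ← Ex_add, ← Ex_one p N]
  congr 1
  funext G
  by_cases h : A G <;> simp [ind, h]

lemma step_bound (p : ℕ → ℕ → ℝ) (hp : ∀ i j, p i j = p j i)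
    {N : ℕ} (w : Fin N → ℝ) (hw : ∀ u, 0 ≤ w u) (κ : ℝ) (hκ : 0 ≤ κ)
    (hpw : ∀ a u : Fin N, 1 - p ((a : ℕ) + 1) ((u : ℕ) + 1) = Real.exp (-(κ * w a * w u)))
    (A U : Finset (Fin N)) (hAU : Disjoint A U) (K η θ l : ℝ) (hη : 0 ≤ η) (hθ : 0 ≤ θ)
    (hK : ∀ u ∈ U, w u ≤ K) (h1 : κ * K * ∑ a ∈ A, w a ≤ η) (h2 : θ * K ≤ η)
    (h3 : l * (1 + η) ^ 2 ≤ κ * ∑ u ∈ U, w u ^ 2) :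
    Ex p N (fun G => Real.exp (-(θ * ∑ u ∈ nbS G A U, w u))) ≤
      Real.exp (-(θ * l * ∑ a ∈ A, w a)) := by
  have hW : 0 ≤ ∑ a ∈ A, w a := Finset.sum_nonneg fun a _ => hw a
  set WA := ∑ a ∈ A, w a with hWA
  have e1 : (fun G : SimpleGraph (Fin N) => Real.exp (-(θ * ∑ u ∈ nbS G A U, w u))) =
      fun G => ∏ u ∈ U, (Real.exp (-(θ * w u)) +
        ind (¬ ∃ a ∈ A, G.Adj a u) * (1 - Real.exp (-(θ * w u)))) := by
    funext G
    rw [Finset.mul_sum, ← Finset.sum_neg_distrib, Real.exp_sum]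
    unfold nbS
    rw [Finset.prod_filter]
    refine Finset.prod_congr rfl fun u _ => ?_
    by_cases h : ∃ a ∈ A, G.Adj a u
    · rw [if_pos h, ind_false (not_not.mpr h)]; ring
    · rw [if_neg h, ind_true h]; ring
  rw [e1, Ex_prod p A U hAU]
  · have e2 : ∀ u ∈ U, Ex p N (fun G => Real.exp (-(θ * w u)) +
        ind (¬ ∃ a ∈ A, G.Adj a u) * (1 - Real.exp (-(θ * w u)))) ≤
        Real.exp (-(κ * w u * WA / (1 + η) * (θ * w u / (1 + η)))) := by
      intro u hu
      rw [Ex_add, Ex_mul_const, Ex_const, noadj_exp p hp w κ hpw A u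
        (Finset.disjoint_right.mp hAU hu)]
      have i1 := one_sub_exp_ge (κ * w u * WA) η
        (mul_nonneg (mul_nonneg hκ (hw u)) hW) (by
          refine le_trans ?_ h1
          have := hK u hu
          gcongr)
      have i2 := one_sub_exp_ge (θ * w u) η (mul_nonneg hθ (hw u)) (by
          refine le_trans ?_ h2
          have := hK u hu
          gcongr)
      have i3 : 0 ≤ κ * w u * WA / (1 + η) := by have := hw u; positivity
      have i4 : 0 ≤ θ * w u / (1 + η) := by have := hw u; positivity
      have i5 := mul_le_mul i1 i2 i4 (i3.trans i1)
      have i6 := Real.add_one_le_exp (-(κ * w u * WA / (1 + η) * (θ * w u / (1 + η))))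
      nlinarith
    refine (Finset.prod_le_prod ?_ e2).trans ?_
    · intro u _
      have hle : Real.exp (-(θ * w u)) ≤ 1 := Real.exp_le_one_iff.mpr (by
        have := mul_nonneg hθ (hw u); linarith)
      rw [Ex_add, Ex_mul_const, Ex_const]
      have : 0 ≤ Ex p N (fun G => ind (¬ ∃ a ∈ A, G.Adj a u)) := by
        by_cases hu : u ∈ A
        · rename_i hh
          exact absurd hh (Finset.disjoint_left.mp hAU hu)
        · rw [noadj_exp p hp w κ hpw A u hu]; positivity
      have h0 := Real.exp_pos (-(θ * w u))
      have := mul_nonneg this (sub_nonneg.mpr hle)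
      linarith
    · clear_value WA
      rw [← Real.exp_sum]
      apply Real.exp_le_exp.mpr
      rw [Finset.sum_neg_distrib, neg_le_neg_iff]
      have e3 : ∑ u ∈ U, κ * w u * WA / (1 + η) * (θ * w u / (1 + η)) =
          θ * WA * ((κ * ∑ u ∈ U, w u ^ 2) / (1 + η) ^ 2) := by
        rw [Finset.mul_sum, Finset.sum_div, Finset.mul_sum]
        refine Finset.sum_congr rfl fun u _ => ?_
        field_simp
      rw [e3]
      have : l ≤ (κ * ∑ u ∈ U, w u ^ 2) / (1 + η) ^ 2 := by
        rw [le_div_iff₀ (by positivity)]; exact h3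
      calc θ * l * WA = θ * WA * l := by ring
        _ ≤ _ := by gcongr
  · intro u hu G G' h
    simp only
    have : (∃ a ∈ A, G.Adj a u) ↔ (∃ a ∈ A, G'.Adj a u) :=
      exists_congr fun a => and_congr_right fun ha => h a u (Or.inl ⟨ha, by simp⟩)
    rw [this]

lemma grow_bound (p : ℕ → ℕ → ℝ) (hp : ∀ i j, p i j = p j i)
    (hp0 : ∀ i j, 0 ≤ p i j) (hp1 : ∀ i j, p i j ≤ 1)
    {N : ℕ} (w : Fin N → ℝ) (hw : ∀ u, 0 ≤ w u) (κ : ℝ) (hκ : 0 ≤ κ)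
    (hpw : ∀ a u : Fin N, 1 - p ((a : ℕ) + 1) ((u : ℕ) + 1) = Real.exp (-(κ * w a * w u)))
    (L : Finset (Fin N)) (M K η l : ℝ) (hM : 0 < M) (hη : 0 ≤ η) (hl : 1 ≤ l) (hK0 : 0 ≤ K)
    (hK : ∀ u ∈ L, w u ≤ K) (h1 : κ * K * M ≤ η)
    (h3 : l * (1 + η) ^ 2 + κ * K * M ≤ κ * ∑ u ∈ L, w u ^ 2) (k : ℕ) :
    l ^ k / M * K ≤ η → ∀ A U : Finset (Fin N), U ⊆ L → Disjoint A U → ∑ a ∈ A, w a ≤ M →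
    Ex p N (fun G => ind (∑ u ∈ L \ remS G k A U, w u < M)) ≤
      Real.exp (1 - l ^ k / M * ∑ a ∈ A, w a) := by
  induction k with
  | zero =>
    intro _ A U _ _ hA
    calc _ ≤ Ex p N (fun _ => 1) := Ex_mono p hp0 hp1 fun G => ind_le_one _
      _ = 1 := Ex_one p N
      _ ≤ _ := by
        apply Real.one_le_exp
        rw [pow_zero, one_div, sub_nonneg, inv_mul_le_iff₀ hM]
        linarith
  | succ k ih =>
    intro hk A U hUL hAU hA
    have hk' : l ^ k / M * K ≤ η := by
      refine le_trans ?_ hk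
      have : l ^ k ≤ l ^ (k + 1) := pow_le_pow_right₀ hl (by omega)
      gcongr
    have hWmono : ∀ X Y : Finset (Fin N), X ⊆ Y → ∑ u ∈ X, w u ≤ ∑ u ∈ Y, w u :=
      fun X Y h => Finset.sum_le_sum_of_subset_of_nonneg h fun i _ _ => hw i
    have hzero : ∀ k A U, M ≤ ∑ u ∈ L \ U, w u →
        Ex p N (fun G => ind (∑ u ∈ L \ remS G k A U, w u < M)) = 0 := by
      intro k A U hU
      rw [← Ex_const p N 0]
      congr 1
      funext G
      apply ind_false
      rw [not_lt]
      exact hU.trans (hWmono _ _ (Finset.sdiff_subset_sdiff (Finset.Subset.refl _)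
        (remS_subset G k A U)))
    by_cases hU : M ≤ ∑ u ∈ L \ U, w u
    · rw [hzero _ _ _ hU]; positivity
    rw [not_le] at hU
    have hcond := Ex_cond p hp0 hp1 (EBtw A U) (fun u v => u ∈ U ∧ v ∈ U) (EBtw_symm A U)
      (by
        intro u v h ⟨h1, h2⟩
        have hd := Finset.disjoint_left.mp hAU
        rcases h with ⟨h3, _⟩ | ⟨_, h3⟩
        · exact hd h3 h1
        · exact hd h3 h2)
      U.powerset (fun G => nbS G A U) (fun G => Finset.mem_powerset.mpr (nbS_subset _ _ _))
      (nbS_dep A U)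
      (fun B G => ind (∑ u ∈ L \ remS G k B (U \ B), w u < M))
      (by
        intro B hB G G' h
        simp only
        rw [remS_congr G G' k B (U \ B)]
        intro u v hu hv
        refine h u v ⟨?_, (Finset.mem_sdiff.mp hv).1⟩
        rcases Finset.mem_union.mp hu with hu | hu
        · exact Finset.mem_powerset.mp hB hu
        · exact (Finset.mem_sdiff.mp hu).1)
      (fun B => Real.exp (1 - l ^ k / M * ∑ a ∈ B, w a))
      (by
        intro B hB
        rw [Finset.mem_powerset] at hB
        by_cases hB2 : M ≤ ∑ u ∈ L \ (U \ B), w u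
        · rw [hzero _ _ _ hB2]; positivity
        · refine ih hk' B (U \ B) (Finset.sdiff_subset.trans hUL) Finset.disjoint_sdiff ?_
          refine le_trans (hWmono B (L \ (U \ B)) ?_) (not_le.mp hB2).le
          intro x hx
          exact Finset.mem_sdiff.mpr ⟨hUL (hB hx), fun h => (Finset.mem_sdiff.mp h).2 hx⟩)
    refine hcond.trans ?_
    have hsq : l * (1 + η) ^ 2 ≤ κ * ∑ u ∈ U, w u ^ 2 := by
      have e : ∑ u ∈ L, w u ^ 2 = ∑ u ∈ L \ U, w u ^ 2 + ∑ u ∈ U, w u ^ 2 :=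
        (Finset.sum_sdiff hUL).symm
      have e2 : ∑ u ∈ L \ U, w u ^ 2 ≤ K * M := by
        calc ∑ u ∈ L \ U, w u ^ 2 ≤ ∑ u ∈ L \ U, K * w u := by
              refine Finset.sum_le_sum fun u hu => ?_
              rw [sq]
              exact mul_le_mul_of_nonneg_right (hK u (Finset.mem_sdiff.mp hu).1) (hw u)
          _ = K * ∑ u ∈ L \ U, w u := by rw [Finset.mul_sum]
          _ ≤ K * M := by gcongr
      have e3 := mul_le_mul_of_nonneg_left e2 hκ
      rw [e] at h3
      linarith
    have hst := step_bound p hp w hw κ hκ hpw A U hAU K η (l ^ k / M) l hη (by positivity)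
      (fun u hu => hK u (hUL hu)) (le_trans (by gcongr) h1) hk' hsq
    have e4 : (fun G : SimpleGraph (Fin N) => Real.exp (1 - l ^ k / M * ∑ a ∈ nbS G A U, w a)) =
        fun G => Real.exp (-(l ^ k / M * ∑ u ∈ nbS G A U, w u)) * Real.exp 1 := by
      funext G
      rw [← Real.exp_add]; congr 1; ring
    rw [e4, Ex_mul_const]
    calc _ ≤ Real.exp (-(l ^ k / M * l * ∑ a ∈ A, w a)) * Real.exp 1 := by gcongr
      _ = _ := by rw [← Real.exp_add]; congr 1; rw [pow_succ]; ring

lemma join_bound (p : ℕ → ℕ → ℝ) (hp : ∀ i j, p i j = p j i)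
    (hp0 : ∀ i j, 0 ≤ p i j) (hp1 : ∀ i j, p i j ≤ 1)
    {N : ℕ} (w : Fin N → ℝ) (κ c : ℝ)
    (hpw : ∀ a u : Fin N, 1 - p ((a : ℕ) + 1) ((u : ℕ) + 1) = Real.exp (-(κ * w a * w u)))
    (X Y R : Finset (Fin N)) (hXY : Disjoint X Y) (hXR : Disjoint (X ∪ Y) R)
    (hR : ∀ r ∈ R, 1 ≤ w r) (hc : 0 ≤ c)
    (hX : c ≤ κ * ∑ u ∈ X, w u) (hY : c ≤ κ * ∑ u ∈ Y, w u) :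
    Ex p N (fun G => ind (¬ ∃ r ∈ R, (∃ x ∈ X, G.Adj x r) ∧ ∃ y ∈ Y, G.Adj y r)) ≤
      (1 - (1 - Real.exp (-c)) ^ 2) ^ R.card := by
  have e1 : (fun G : SimpleGraph (Fin N) =>
      ind (¬ ∃ r ∈ R, (∃ x ∈ X, G.Adj x r) ∧ ∃ y ∈ Y, G.Adj y r)) =
      fun G => ∏ r ∈ R, ind (¬ ((∃ x ∈ X, G.Adj x r) ∧ ∃ y ∈ Y, G.Adj y r)) := by
    funext G
    by_cases h : ∃ r ∈ R, (∃ x ∈ X, G.Adj x r) ∧ ∃ y ∈ Y, G.Adj y r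
    · rw [ind_false (not_not.mpr h)]
      obtain ⟨r, hr, h⟩ := h
      symm
      exact Finset.prod_eq_zero hr (ind_false (not_not.mpr h))
    · rw [ind_true h]
      symm
      exact Finset.prod_eq_one fun r hr => ind_true fun h1 => h ⟨r, hr, h1⟩
  have hdep : ∀ (Z : Finset (Fin N)) (r : Fin N) (G G' : SimpleGraph (Fin N)),
      (∀ u v, EBtw Z {r} u v → (G.Adj u v ↔ G'.Adj u v)) →
      ((∃ a ∈ Z, G.Adj a r) ↔ (∃ a ∈ Z, G'.Adj a r)) := fun Z r G G' h =>
      exists_congr fun a => and_congr_right fun ha => h a r (Or.inl ⟨ha, by simp⟩)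
  have hmono : ∀ (Z Z' : Finset (Fin N)) (r : Fin N), Z ⊆ Z' → ∀ u v, EBtw Z {r} u v →
      EBtw Z' {r} u v := by
    intro Z Z' r hZ u v h
    rcases h with ⟨h1, h2⟩ | ⟨h1, h2⟩
    · exact Or.inl ⟨hZ h1, h2⟩
    · exact Or.inr ⟨h1, hZ h2⟩
  rw [e1, Ex_prod p (X ∪ Y) R hXR]
  · rw [← Finset.prod_const]
    refine Finset.prod_le_prod (fun r _ => Ex_nonneg p hp0 hp1 fun G => ind_nonneg _) ?_
    intro r hr
    have hrXY := Finset.disjoint_right.mp hXR hr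
    have hrX : r ∉ X := fun h => hrXY (Finset.mem_union_left _ h)
    have hrY : r ∉ Y := fun h => hrXY (Finset.mem_union_right _ h)
    have e2 : (fun G : SimpleGraph (Fin N) => ind ((∃ x ∈ X, G.Adj x r) ∧ ∃ y ∈ Y, G.Adj y r)) =
        fun G => ind (∃ x ∈ X, G.Adj x r) * ind (∃ y ∈ Y, G.Adj y r) := by
      funext G
      by_cases h1 : ∃ x ∈ X, G.Adj x r <;> by_cases h2 : ∃ y ∈ Y, G.Adj y r <;>
        simp only [ind, h1, h2] <;> simp
    have e3 := Ex_ind_not p (N := N) (fun G => (∃ x ∈ X, G.Adj x r) ∧ ∃ y ∈ Y, G.Adj y r)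
    rw [e2, Ex_indep p (EBtw X {r}) (EBtw Y {r}) (EBtw_symm _ _)] at e3
    · rw [Ex_ind_not p (N := N) (fun G => ∃ x ∈ X, G.Adj x r),
        Ex_ind_not p (N := N) (fun G => ∃ x ∈ Y, G.Adj x r),
        noadj_exp p hp w κ hpw X r hrX, noadj_exp p hp w κ hpw Y r hrY] at e3
      have key : ∀ Z : Finset (Fin N), c ≤ κ * ∑ u ∈ Z, w u →
          1 - Real.exp (-c) ≤ 1 - Real.exp (-(κ * w r * ∑ a ∈ Z, w a)) := by
        intro Z hZ
        have : Real.exp (-(κ * w r * ∑ a ∈ Z, w a)) ≤ Real.exp (-c) := by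
          apply Real.exp_le_exp.mpr
          have := mul_le_mul (hR r hr) hZ hc (by linarith [hR r hr])
          nlinarith
        linarith
      have h0 : 0 ≤ 1 - Real.exp (-c) := by
        have : Real.exp (-c) ≤ 1 := Real.exp_le_one_iff.mpr (by linarith)
        linarith
      have := mul_le_mul (key X hX) (key Y hY) h0 (h0.trans (key X hX))
      nlinarith
    · intro u v h1 h2
      have hd := Finset.disjoint_left.mp hXY
      simp only [EBtw, Finset.mem_singleton] at h1 h2
      rcases h1 with ⟨h1, rfl⟩ | ⟨rfl, h1⟩ <;> rcases h2 with ⟨h2, h3⟩ | ⟨h2, h3⟩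
      · exact hd h1 h2
      · exact hrY h3
      · exact hrY h2
      · exact hd h1 h3
    · intro G G' h
      simp only [hdep X r G G' h]
    · intro G G' h
      simp only [hdep Y r G G' h]
  · intro r _ G G' h
    simp only
    rw [hdep X r G G' fun u v huv => h u v (hmono _ _ _ Finset.subset_union_left u v huv),
      hdep Y r G G' fun u v huv => h u v (hmono _ _ _ Finset.subset_union_right u v huv)]

lemma good_of_events {N : ℕ} (G : SimpleGraph (Fin N)) (w : Fin N → ℝ)
    (L R : Finset (Fin N)) (M : ℝ) (k : ℕ) (s t : Fin N)
    (hs : M ≤ ∑ u ∈ L \ remS G k {s} L, w u) (ht : M ≤ ∑ u ∈ L \ remS G k {t} L, w u)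
    (hb : ¬ (M ≤ ∑ u ∈ L \ remS G k {s} L, w u ∧ M ≤ ∑ u ∈ L \ remS G k {t} L, w u ∧
      Disjoint (L \ remS G k {s} L) (L \ remS G k {t} L) ∧
      ¬ ∃ r ∈ R, (∃ x ∈ L \ remS G k {s} L, G.Adj x r) ∧ ∃ y ∈ L \ remS G k {t} L, G.Adj y r)) :
    ∃ q : G.Walk s t, q.IsPath ∧ q.length ≤ 2 * k + 2 ∧
      ∀ v ∈ q.support, v ≠ s → v ≠ t → v ∈ L ∪ R := by
  have hred : (∃ q : G.Walk s t, q.length ≤ 2 * k + 2 ∧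
      ∀ v ∈ q.support, v ≠ s → v ≠ t → v ∈ L ∪ R) → ∃ q : G.Walk s t, q.IsPath ∧
      q.length ≤ 2 * k + 2 ∧ ∀ v ∈ q.support, v ≠ s → v ≠ t → v ∈ L ∪ R := by
    rintro ⟨q, h1, h2⟩
    exact ⟨q.bypass, q.bypass_isPath, q.length_bypass_le_length.trans h1,
      fun v hv => h2 v (q.support_bypass_subset_support hv)⟩
  apply hred
  have hwalk : ∀ (a v : Fin N), v ∈ L \ remS G k {a} L →
      ∃ q : G.Walk a v, q.length ≤ k ∧ ∀ x ∈ q.support, x = a ∨ x ∈ L := by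
    intro a v hv
    rw [Finset.mem_sdiff] at hv
    obtain ⟨b, hb, q, h⟩ := remS_walk G k {a} L v hv.1 hv.2
    obtain rfl := Finset.mem_singleton.mp hb
    exact ⟨q, h⟩
  by_cases hd : Disjoint (L \ remS G k {s} L) (L \ remS G k {t} L)
  · have hJ : ∃ r ∈ R, (∃ x ∈ L \ remS G k {s} L, G.Adj x r) ∧
        ∃ y ∈ L \ remS G k {t} L, G.Adj y r := by
      by_contra hJ
      exact hb ⟨hs, ht, hd, hJ⟩
    obtain ⟨r, hr, ⟨x, hx, hxr⟩, y, hy, hyr⟩ := hJ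
    obtain ⟨q1, hq1, hs1⟩ := hwalk s x hx
    obtain ⟨q2, hq2, hs2⟩ := hwalk t y hy
    refine ⟨q1.append (SimpleGraph.Walk.cons hxr (SimpleGraph.Walk.cons hyr.symm q2.reverse)), ?_, ?_⟩
    · simp only [SimpleGraph.Walk.length_append, SimpleGraph.Walk.length_cons,
        SimpleGraph.Walk.length_reverse]
      omega
    · intro v hv hvs hvt
      rw [SimpleGraph.Walk.mem_support_append_iff] at hv
      simp only [SimpleGraph.Walk.support_cons, List.mem_cons, SimpleGraph.Walk.support_reverse,
        List.mem_reverse] at hv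
      rw [Finset.mem_union]
      rcases hv with hv | rfl | rfl | hv
      · rcases hs1 v hv with h | h
        · exact absurd h hvs
        · exact Or.inl h
      · exact Or.inl (Finset.mem_sdiff.mp hx).1
      · exact Or.inr hr
      · rcases hs2 v hv with h | h
        · exact absurd h hvt
        · exact Or.inl h
  · rw [Finset.not_disjoint_iff] at hd
    obtain ⟨x, hx, hy⟩ := hd
    obtain ⟨q1, hq1, hs1⟩ := hwalk s x hx
    obtain ⟨q2, hq2, hs2⟩ := hwalk t x hy
    refine ⟨q1.append q2.reverse, ?_, ?_⟩
    · simp only [SimpleGraph.Walk.length_append, SimpleGraph.Walk.length_reverse]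
      omega
    · intro v hv hvs hvt
      rw [SimpleGraph.Walk.mem_support_append_iff] at hv
      simp only [SimpleGraph.Walk.support_reverse, List.mem_reverse] at hv
      rw [Finset.mem_union]
      rcases hv with hv | hv
      · rcases hs1 v hv with h | h
        · exact absurd h hvs
        · exact Or.inl h
      · rcases hs2 v hv with h | h
        · exact absurd h hvt
        · exact Or.inl h

lemma main_bound (p : ℕ → ℕ → ℝ) (hp : ∀ i j, p i j = p j i)
    (hp0 : ∀ i j, 0 ≤ p i j) (hp1 : ∀ i j, p i j ≤ 1)
    {N : ℕ} (w : Fin N → ℝ) (hw : ∀ u, 1 ≤ w u) (κ : ℝ) (hκ : 0 ≤ κ)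
    (hpw : ∀ a u : Fin N, 1 - p ((a : ℕ) + 1) ((u : ℕ) + 1) = Real.exp (-(κ * w a * w u)))
    (L R S : Finset (Fin N)) (M K η l b : ℝ) (hM : 0 < M) (hη : 0 ≤ η) (hl : 1 ≤ l) (hK0 : 0 ≤ K)
    (hK : ∀ u ∈ L, w u ≤ K) (h1 : κ * K * M ≤ η)
    (h3 : l * (1 + η) ^ 2 + κ * K * M ≤ κ * ∑ u ∈ L, w u ^ 2) (k : ℕ)
    (hk : l ^ k / M * K ≤ η) (hLR : Disjoint L R) (hSL : Disjoint S L) (hSR : Disjoint S R)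
    (hSM : ∀ s ∈ S, w s ≤ M) (hSb : ∀ s ∈ S, b ≤ w s) :
    1 - (N * Real.exp (1 - l ^ k / M * b) +
      N * (N * (1 - (1 - Real.exp (-(κ * M))) ^ 2) ^ R.card)) ≤
    Ex p N (fun G => ind (∀ s ∈ S, ∀ t ∈ S, ∃ q : G.Walk s t, q.IsPath ∧ q.length ≤ 2 * k + 2 ∧
      ∀ v ∈ q.support, v ≠ s → v ≠ t → v ∈ L ∪ R)) := by
  have hw0 : ∀ u, 0 ≤ w u := fun u => zero_le_one.trans (hw u)
  have hcard : (S.card : ℝ) ≤ N := by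
    have := Finset.card_le_univ S
    rw [Fintype.card_fin] at this
    exact_mod_cast this
  set q0 := (1 - (1 - Real.exp (-(κ * M))) ^ 2) ^ R.card with hq0
  have hexp1 : Real.exp (-(κ * M)) ≤ 1 := Real.exp_le_one_iff.mpr (by
    have := mul_nonneg hκ hM.le; linarith)
  have hexp0 := Real.exp_pos (-(κ * M))
  have hq0' : 0 ≤ q0 := by
    apply pow_nonneg
    nlinarith
  rw [Ex_ind_not, sub_le_sub_iff_left]
  let X : Fin N → SimpleGraph (Fin N) → Finset (Fin N) := fun s G => L \ remS G k {s} L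
  let bad : Finset (Fin N) × Finset (Fin N) → SimpleGraph (Fin N) → Prop := fun Z G =>
    (M ≤ ∑ u ∈ Z.1, w u ∧ M ≤ ∑ u ∈ Z.2, w u ∧ Disjoint Z.1 Z.2 ∧
      ¬ ∃ r ∈ R, (∃ x ∈ Z.1, G.Adj x r) ∧ ∃ y ∈ Z.2, G.Adj y r)
  have hle : ∀ G : SimpleGraph (Fin N), ind (¬ ∀ s ∈ S, ∀ t ∈ S, ∃ q : G.Walk s t, q.IsPath ∧
      q.length ≤ 2 * k + 2 ∧ ∀ v ∈ q.support, v ≠ s → v ≠ t → v ∈ L ∪ R) ≤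
      ∑ s ∈ S, ind (∑ u ∈ X s G, w u < M) + ∑ s ∈ S, ∑ t ∈ S, ind (bad (X s G, X t G) G) := by
    intro G
    have n1 : 0 ≤ ∑ s ∈ S, ind (∑ u ∈ X s G, w u < M) :=
      Finset.sum_nonneg fun s _ => ind_nonneg _
    have n2 : ∀ s ∈ S, 0 ≤ ∑ t ∈ S, ind (bad (X s G, X t G) G) :=
      fun s _ => Finset.sum_nonneg fun t _ => ind_nonneg _
    have n3 := Finset.sum_nonneg n2
    by_cases hg : ∀ s ∈ S, ∀ t ∈ S, ∃ q : G.Walk s t, q.IsPath ∧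
      q.length ≤ 2 * k + 2 ∧ ∀ v ∈ q.support, v ≠ s → v ≠ t → v ∈ L ∪ R
    · rw [ind_false (not_not.mpr hg)]
      linarith
    · rw [ind_true hg]
      by_contra hlt
      rw [not_le] at hlt
      apply hg
      have a1 : ∀ s ∈ S, M ≤ ∑ u ∈ X s G, w u := by
        intro s hs
        by_contra hc
        have := Finset.single_le_sum (f := fun s => ind (∑ u ∈ X s G, w u < M))
          (fun s _ => ind_nonneg _) hs
        simp only [ind_true (not_le.mp hc)] at this
        linarith
      intro s hs t ht
      refine good_of_events G w L R M k s t (a1 s hs) (a1 t ht) fun hc => ?_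
      have b1 := Finset.single_le_sum (f := fun t => ind (bad (X s G, X t G) G))
          (fun s _ => ind_nonneg _) ht
      have b2 := Finset.single_le_sum n2 hs
      have hc' : bad (X s G, X t G) G := hc
      simp only [ind_true hc'] at b1
      linarith
  refine (Ex_mono p hp0 hp1 hle).trans ?_
  rw [Ex_add, Ex_sum, Ex_sum]
  simp only [Ex_sum]
  refine add_le_add ?_ ?_
  · calc _ ≤ ∑ s ∈ S, Real.exp (1 - l ^ k / M * b) := by
          refine Finset.sum_le_sum fun s hs => ?_
          refine (grow_bound p hp hp0 hp1 w hw0 κ hκ hpw L M K η l hM hη hl hK0 hK h1 h3 k hk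
            {s} L (Finset.Subset.refl _) ?_ ?_).trans ?_
          · rw [Finset.disjoint_singleton_left]
            exact Finset.disjoint_left.mp hSL hs
          · simpa using hSM s hs
          · rw [Finset.sum_singleton]
            apply Real.exp_le_exp.mpr
            have := mul_le_mul_of_nonneg_left (hSb s hs) (by positivity : 0 ≤ l ^ k / M)
            linarith
      _ ≤ _ := by
        rw [Finset.sum_const, nsmul_eq_mul]
        gcongr
  · have hst : ∀ s ∈ S, ∀ t ∈ S, Ex p N (fun G => ind (bad (X s G, X t G) G)) ≤ q0 := by
      intro s hs t ht
      rw [← Ex_const p N q0]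
      refine Ex_cond p hp0 hp1 (fun u v => u ∉ R ∧ v ∉ R) (EBtw L R) (fun u v h => ⟨h.2, h.1⟩) ?_
        (L.powerset ×ˢ L.powerset) (fun G => (X s G, X t G)) ?_ ?_ (fun Z G => ind (bad Z G)) ?_
        (fun _ => q0) ?_
      · rintro u v ⟨hu, hv⟩ (⟨_, h⟩ | ⟨h, _⟩)
        · exact hv h
        · exact hu h
      · intro G
        simp [X, Finset.sdiff_subset]
      · intro G G' h
        have : ∀ s ∈ S, X s G = X s G' := by
          intro s hs
          simp only [X]
          rw [remS_congr G G' k {s} L]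
          intro u v hu hv
          have hnR : ∀ x, x ∈ L → x ∉ R := fun x hx => Finset.disjoint_left.mp hLR hx
          refine h u v ⟨?_, hnR v hv⟩
          rcases Finset.mem_union.mp hu with hu | hu
          · rw [Finset.mem_singleton.mp hu]
            exact Finset.disjoint_left.mp hSR hs
          · exact hnR u hu
        simp only [this s hs, this t ht]
      · rintro ⟨Z1, Z2⟩ hZ G G' h
        simp only [Finset.mem_product, Finset.mem_powerset] at hZ
        have hd : ∀ Z ⊆ L, ∀ r ∈ R, ((∃ x ∈ Z, G.Adj x r) ↔ (∃ x ∈ Z, G'.Adj x r)) :=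
          fun Z hZ r hr => exists_congr fun a => and_congr_right fun ha =>
            h a r (Or.inl ⟨hZ ha, hr⟩)
        have hd2 : (∃ r ∈ R, (∃ x ∈ Z1, G.Adj x r) ∧ ∃ y ∈ Z2, G.Adj y r) ↔
            (∃ r ∈ R, (∃ x ∈ Z1, G'.Adj x r) ∧ ∃ y ∈ Z2, G'.Adj y r) :=
          exists_congr fun r => and_congr_right fun hr => by
            rw [hd Z1 hZ.1 r hr, hd Z2 hZ.2 r hr]
        simp only [bad]
        rw [hd2]
      · rintro ⟨Z1, Z2⟩ hZ
        simp only [Finset.mem_product, Finset.mem_powerset] at hZ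
        by_cases hc : M ≤ ∑ u ∈ Z1, w u ∧ M ≤ ∑ u ∈ Z2, w u ∧ Disjoint Z1 Z2
        · refine (Ex_mono p hp0 hp1 (g := fun G => ind (¬ ∃ r ∈ R, (∃ x ∈ Z1, G.Adj x r) ∧
            ∃ y ∈ Z2, G.Adj y r)) ?_).trans (join_bound p hp hp0 hp1 w κ (κ * M) hpw Z1 Z2 R
              hc.2.2 ?_ (fun r _ => hw r) (by positivity) ?_ ?_)
          · intro G
            by_cases hb : bad (Z1, Z2) G
            · rw [ind_true hb, ind_true hb.2.2.2]
            · rw [ind_false hb]; exact ind_nonneg _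
          · exact Finset.disjoint_of_subset_left (Finset.union_subset hZ.1 hZ.2) hLR
          · have := hc.1
            gcongr
          · have := hc.2.1
            gcongr
        · refine le_trans (le_of_eq ?_) hq0'
          rw [← Ex_const p N 0]
          congr 1
          funext G
          apply ind_false
          rintro ⟨c1, c2, c3, _⟩
          exact hc ⟨c1, c2, c3⟩
    calc _ ≤ ∑ s ∈ S, ∑ t ∈ S, q0 :=
          Finset.sum_le_sum fun s hs => Finset.sum_le_sum fun t ht => hst s hs t ht
      _ ≤ _ := by
        simp only [Finset.sum_const, nsmul_eq_mul]
        gcongr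

lemma rpow_tele (b : ℝ) (hb0 : 0 < b) (hb1 : b ≤ 1) (m n : ℕ) (hmn : m ≤ n) :
    ((n : ℝ) + 1) ^ b - ((m : ℝ) + 1) ^ b ≤ ∑ i ∈ Finset.Ico m n, b * ((i : ℝ) + 1) ^ (b - 1) := by
  induction n, hmn using Nat.le_induction with
  | base => simp
  | succ n hmn ih =>
    rw [Finset.sum_Ico_succ_top hmn]
    have h1 : ((n : ℝ) + 1 + 1) ^ b ≤ ((n : ℝ) + 1) ^ b + b * ((n : ℝ) + 1) ^ (b - 1) := by
      have hn : (0 : ℝ) < (n : ℝ) + 1 := by positivity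
      have e : (n : ℝ) + 1 + 1 = ((n : ℝ) + 1) * (1 + 1 / ((n : ℝ) + 1)) := by field_simp
      have h2 := rpow_one_add_le_one_add_mul_self (s := 1 / ((n : ℝ) + 1))
        (by have : 0 ≤ 1 / ((n : ℝ) + 1) := by positivity
            linarith) hb0.le hb1
      rw [e, Real.mul_rpow hn.le (by positivity), Real.rpow_sub_one hn.ne']
      calc _ ≤ ((n : ℝ) + 1) ^ b * (1 + b * (1 / ((n : ℝ) + 1))) := by gcongr
        _ = _ := by ring
    push_cast
    linarith

lemma sum_sq_bound (γ β b ε ρ : ℝ) (hβ : 0 < β) (hb0 : 0 < b) (hb1 : b ≤ 1)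
    (hbγ : 1 - b ≤ 2 * γ) (hε : 0 < ε) (hερ : ε ≤ ρ) (hρ : ρ ≤ 1) (N : ℕ) (hN : 1 ≤ ε * N) :
    β / b * (ρ ^ b - (2 * ε) ^ b) ≤
      β / N * ∑ v ∈ Finset.univ.filter (fun v : Fin N => ⌊ε * (N : ℝ)⌋₊ < (v : ℕ) + 1 ∧
        (v : ℕ) + 1 ≤ ⌊ρ * (N : ℝ)⌋₊), (((N : ℝ) / ((v : ℕ) + 1)) ^ γ) ^ 2 := by
  have hNpos : (0 : ℝ) < N := by
    by_contra h
    have : ε * N ≤ 0 := mul_nonpos_of_nonneg_of_nonpos hε.le (not_lt.mp h)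
    linarith
  set m := ⌊ε * (N : ℝ)⌋₊ with hm
  set n := ⌊ρ * (N : ℝ)⌋₊ with hn
  have hmn : m ≤ n := Nat.floor_le_floor (by gcongr)
  have hnN : n ≤ N := by
    have : ⌊ρ * (N : ℝ)⌋₊ ≤ ⌊(N : ℝ)⌋₊ := Nat.floor_le_floor (by nlinarith)
    simpa using this
  have e1 : ∑ v ∈ Finset.univ.filter (fun v : Fin N => m < (v : ℕ) + 1 ∧
        (v : ℕ) + 1 ≤ n), (((N : ℝ) / ((v : ℕ) + 1)) ^ γ) ^ 2 =
      ∑ i ∈ Finset.Ico m n, (((N : ℝ) / ((i : ℝ) + 1)) ^ γ) ^ 2 := by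
    rw [Finset.sum_filter]
    rw [Fin.sum_univ_eq_sum_range (fun i : ℕ => if m < i + 1 ∧ i + 1 ≤ n then
      (((N : ℝ) / ((i : ℝ) + 1)) ^ γ) ^ 2 else 0) N, ← Finset.sum_filter]
    refine Finset.sum_congr ?_ fun _ _ => rfl
    ext i
    simp only [Finset.mem_filter, Finset.mem_range, Finset.mem_Ico]
    omega
  rw [e1]
  have e2 : ∑ i ∈ Finset.Ico m n, (N : ℝ) ^ (1 - b) * ((i : ℝ) + 1) ^ (b - 1) ≤
      ∑ i ∈ Finset.Ico m n, (((N : ℝ) / ((i : ℝ) + 1)) ^ γ) ^ 2 := by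
    refine Finset.sum_le_sum fun i hi => ?_
    have hi' : i + 1 ≤ N := by
      have := (Finset.mem_Ico.mp hi).2
      omega
    have hi2 : (i : ℝ) + 1 ≤ N := by exact_mod_cast hi'
    have hip : (0 : ℝ) < (i : ℝ) + 1 := by positivity
    have h1 : 1 ≤ (N : ℝ) / ((i : ℝ) + 1) := by rw [le_div_iff₀ hip]; linarith
    have e3 : (((N : ℝ) / ((i : ℝ) + 1)) ^ γ) ^ 2 = ((N : ℝ) / ((i : ℝ) + 1)) ^ (2 * γ) := by
      rw [← Real.rpow_natCast, ← Real.rpow_mul (by positivity)]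
      congr 1; push_cast; ring
    rw [e3]
    refine le_trans (le_of_eq ?_) (Real.rpow_le_rpow_of_exponent_le h1 hbγ)
    rw [Real.div_rpow hNpos.le hip.le, show b - 1 = -(1 - b) by ring, Real.rpow_neg hip.le]
    rfl
  have e4 := rpow_tele b hb0 hb1 m n hmn
  rw [← Finset.mul_sum] at e4 e2
  have f1 : ρ ^ b * (N : ℝ) ^ b ≤ ((n : ℝ) + 1) ^ b := by
    rw [← Real.mul_rpow (by linarith) hNpos.le]
    apply Real.rpow_le_rpow (by have : 0 < ρ := by linarith
                                positivity) _ hb0.le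
    exact (Nat.lt_floor_add_one _).le
  have f2 : ((m : ℝ) + 1) ^ b ≤ (2 * ε) ^ b * (N : ℝ) ^ b := by
    rw [← Real.mul_rpow (by linarith) hNpos.le]
    apply Real.rpow_le_rpow (by positivity) _ hb0.le
    have := Nat.floor_le (a := ε * (N : ℝ)) (by positivity)
    rw [← hm] at this
    linarith
  have f3 : (N : ℝ) ^ b * (N : ℝ) ^ (1 - b) = N := by
    rw [← Real.rpow_add hNpos]; simp
  set T1 := ∑ i ∈ Finset.Ico m n, ((i : ℝ) + 1) ^ (b - 1) with hT1
  set T2 := ∑ i ∈ Finset.Ico m n, (((N : ℝ) / ((i : ℝ) + 1)) ^ γ) ^ 2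
  have g1 : (N : ℝ) ^ b * (ρ ^ b - (2 * ε) ^ b) ≤ b * T1 := by linarith
  have g2 : (N : ℝ) * (ρ ^ b - (2 * ε) ^ b) ≤ b * T2 := by
    have hp : 0 ≤ (N : ℝ) ^ (1 - b) := by positivity
    calc (N : ℝ) * (ρ ^ b - (2 * ε) ^ b)
        = (N : ℝ) ^ (1 - b) * ((N : ℝ) ^ b * (ρ ^ b - (2 * ε) ^ b)) := by
          rw [← mul_assoc, mul_comm ((N : ℝ) ^ (1 - b)), f3]
      _ ≤ (N : ℝ) ^ (1 - b) * (b * T1) := by gcongr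
      _ = b * ((N : ℝ) ^ (1 - b) * T1) := by ring
      _ ≤ _ := by gcongr
  rw [div_mul_eq_mul_div, div_mul_eq_mul_div, div_le_div_iff₀ hb0 hNpos]
  nlinarith [mul_le_mul_of_nonneg_left g2 hβ.le]

lemma choose_params (γ β : ℝ) (hγ : 0 < γ) (hβ : max (1 - 2 * γ) 0 < β) :
    ∃ b ε Λ : ℝ, 0 < b ∧ b ≤ 1 ∧ 1 - b ≤ 2 * γ ∧ 0 < ε ∧ ε < 1 / 4 ∧ 1 < Λ ∧
      Λ ≤ β / b * ((1 - ε) ^ b - (2 * ε) ^ b) := by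
  have h1 : 1 - 2 * γ < β := lt_of_le_of_lt (le_max_left _ _) hβ
  have h2 : 0 < β := lt_of_le_of_lt (le_max_right _ _) hβ
  obtain ⟨b, hb0, hb1, hbγ, hbβ⟩ : ∃ b : ℝ, 0 < b ∧ b ≤ 1 ∧ 1 - b ≤ 2 * γ ∧ b < β := by
    refine ⟨max (1 - 2 * γ) (min (β / 2) 1), ?_, ?_, ?_, ?_⟩
    · exact lt_max_of_lt_right (lt_min (by linarith) one_pos)
    · exact max_le (by linarith) (min_le_right _ _)
    · linarith [le_max_left (1 - 2 * γ) (min (β / 2) 1)]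
    · exact max_lt h1 (lt_of_le_of_lt (min_le_left _ _) (by linarith))
  have hc : Continuous (fun x : ℝ => β / b * ((1 - x) ^ b - (2 * x) ^ b)) := by
    refine continuous_const.mul (Continuous.sub ?_ ?_)
    · exact Continuous.rpow_const (by fun_prop) fun _ => Or.inr hb0.le
    · exact Continuous.rpow_const (by fun_prop) fun _ => Or.inr hb0.le
  have ht := hc.tendsto 0
  have hv : 1 < β / b * ((1 - (0 : ℝ)) ^ b - (2 * (0 : ℝ)) ^ b) := by
    rw [mul_zero, Real.zero_rpow hb0.ne', sub_zero, sub_zero, Real.one_rpow, mul_one,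
      one_lt_div hb0]
    exact hbβ
  have he := (ht.eventually (lt_mem_nhds hv)).filter_mono
    (nhdsWithin_le_nhds (s := Set.Ioi (0 : ℝ)))
  have he2 : ∀ᶠ x : ℝ in nhdsWithin 0 (Set.Ioi 0), x ∈ Set.Ioo (0 : ℝ) (1 / 4) :=
    Ioo_mem_nhdsGT (by norm_num)
  obtain ⟨x, hx1, hx2⟩ := (he.and he2).exists
  exact ⟨b, x, _, hb0, hb1, hbγ, hx2.1, hx2.2, hx1, le_refl _⟩

lemma snr_facts (β γ : ℝ) (hβ : 0 ≤ β) (N : ℕ) :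
    (∀ i j, snrEdgeProb β γ N i j = snrEdgeProb β γ N j i) ∧
    (∀ i j, 0 ≤ snrEdgeProb β γ N i j) ∧ (∀ i j, snrEdgeProb β γ N i j ≤ 1) := by
  refine ⟨fun i j => ?_, fun i j => ?_, fun i j => ?_⟩
  · unfold snrEdgeProb
    congr 3
    ring
  · unfold snrEdgeProb
    rw [sub_nonneg]
    apply Real.exp_le_one_iff.mpr
    rw [neg_nonpos]
    positivity
  · unfold snrEdgeProb
    linarith [Real.exp_pos (-(β * (N : ℝ) ^ (2 * γ - 1) * (i : ℝ) ^ (-γ) * (j : ℝ) ^ (-γ)))]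

lemma snr_weight (β γ : ℝ) (N : ℕ) (a u : Fin N) :
    1 - snrEdgeProb β γ N ((a : ℕ) + 1) ((u : ℕ) + 1) =
      Real.exp (-(β / N * ((N : ℝ) / ((a : ℕ) + 1)) ^ γ * ((N : ℝ) / ((u : ℕ) + 1)) ^ γ)) := by
  have hN : (0 : ℝ) < N := by
    have := a.pos
    exact_mod_cast this
  unfold snrEdgeProb
  rw [sub_sub_cancel]
  congr 2
  push_cast
  rw [Real.div_rpow hN.le (by positivity), Real.div_rpow hN.le (by positivity),
    Real.rpow_neg (by positivity), Real.rpow_neg (by positivity), Real.rpow_sub hN,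
    Real.rpow_one, two_mul, Real.rpow_add hN]
  field_simp

lemma err1_tendsto (c τ : ℝ) (hc : 0 < c) (hτ : 1 < τ) :
    Tendsto (fun N : ℕ => (N : ℝ) * Real.exp (1 - c * Real.log N ^ τ)) atTop (nhds 0) := by
  have hlog : Tendsto (fun N : ℕ => Real.log N) atTop atTop :=
    Real.tendsto_log_atTop.comp tendsto_natCast_atTop_atTop
  have h1 : ∀ᶠ N : ℕ in atTop, 2 / c ≤ Real.log N ^ (τ - 1) :=
    ((tendsto_rpow_atTop (by linarith : 0 < τ - 1)).comp hlog).eventually_ge_atTop _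
  have h2 : Tendsto (fun N : ℕ => Real.exp 1 * (N : ℝ)⁻¹) atTop (nhds 0) := by
    simpa using (tendsto_inv_atTop_zero.comp
      (tendsto_natCast_atTop_atTop (R := ℝ))).const_mul (Real.exp 1)
  refine squeeze_zero' (Eventually.of_forall fun N => by positivity) ?_ h2
  filter_upwards [h1, hlog.eventually_ge_atTop 1, eventually_ge_atTop 1] with N hN hN1 hN2
  have hNp : (0 : ℝ) < N := by exact_mod_cast hN2
  have hl0 : 0 < Real.log N := by linarith
  have e : Real.log N ^ τ = Real.log N ^ (τ - 1) * Real.log N := by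
    rw [Real.rpow_sub_one hl0.ne']; field_simp
  have h3 : 2 * Real.log N ≤ c * Real.log N ^ τ := by
    rw [e]
    rw [div_le_iff₀ hc] at hN
    nlinarith
  calc (N : ℝ) * Real.exp (1 - c * Real.log N ^ τ)
      ≤ N * Real.exp (1 - 2 * Real.log N) := by gcongr
    _ = _ := by
      rw [sub_eq_add_neg, Real.exp_add, show -(2 * Real.log (N : ℝ)) =
        -Real.log N + -Real.log N by ring, Real.exp_add, Real.exp_neg, Real.exp_log hNp]
      field_simp

lemma err2_tendsto (c : ℝ) (hc : 0 < c) :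
    Tendsto (fun N : ℕ => (N : ℝ) * (N * Real.exp (-(c * N)))) atTop (nhds 0) := by
  have h1 : Tendsto (fun N : ℕ => c * (N : ℝ)) atTop atTop :=
    tendsto_natCast_atTop_atTop.const_mul_atTop hc
  have h2 := ((Real.tendsto_pow_mul_exp_neg_atTop_nhds_zero 2).comp h1).const_mul (1 / c ^ 2)
  rw [mul_zero] at h2
  refine h2.congr fun N => ?_
  simp only [Function.comp]
  field_simp

set_option maxHeartbeats 2000000 in
/-- For `γ ∈ (0,1)`, `β > max(1−2γ,0)` and `α > 1/γ`, with
`S = [⌊N log^{−α} N⌋]`, there are `ε ∈ (0,1)` and `C > 0` such that, with probability tending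
to `1` as `N → ∞`, simultaneously every pair of vertices `s,t ∈ S` is connected in `G_N` by a
path of length at most `C log N` all of whose vertices other than `s` and `t` lie in
`L_ε = [N] ∖ [⌊εN⌋]`. (Vertices are 1-based: the vertex `v : Fin N` has index `v + 1`.) -/
theorem snr_low_weight_paths
    (γ β α : ℝ) (hγ : γ ∈ Set.Ioo (0 : ℝ) 1) (hβ : max (1 - 2 * γ) 0 < β)
    (hα : 1 / γ < α) :
    ∃ ε ∈ Set.Ioo (0 : ℝ) 1, ∃ C > (0 : ℝ),
      Tendsto
        (fun N : ℕ =>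
          snrProb β γ N (fun G =>
            ∀ s t : Fin N,
              (s : ℕ) + 1 ≤ ⌊(N : ℝ) * Real.log N ^ (-α)⌋₊ →
              (t : ℕ) + 1 ≤ ⌊(N : ℝ) * Real.log N ^ (-α)⌋₊ →
              ∃ p : G.Walk s t, p.IsPath ∧ (p.length : ℝ) ≤ C * Real.log N ∧
                ∀ v ∈ p.support, v ≠ s → v ≠ t → ⌊ε * (N : ℝ)⌋₊ < (v : ℕ) + 1))
        atTop (nhds 1) := by
  obtain ⟨hγ0, hγ1⟩ := hγ
  have hβ0 : 0 < β := lt_of_le_of_lt (le_max_right _ _) hβ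
  have hα0 : 0 < α := lt_trans (by positivity) hα
  have hτ : 1 < α * γ := by rwa [div_lt_iff₀ hγ0] at hα
  obtain ⟨b, ε, Λ, hb0, hb1, hbγ, hε0, hε4, hΛ1, hΛ⟩ := choose_params γ β hγ0 hβ
  set ρ := 1 - ε with hρ
  set η := min 1 ((Λ - 1) / 8) with hη
  have hη0 : 0 < η := lt_min one_pos (by linarith)
  have hη1 : η ≤ 1 := min_le_left _ _
  have hη8 : 8 * η ≤ Λ - 1 := by linarith [min_le_right 1 ((Λ - 1) / 8)]
  set K := (1 / ε) ^ γ with hK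
  have hK0 : 0 < K := by positivity
  set δ := η / (β * K) with hδ
  have hδ0 : 0 < δ := by positivity
  set l := 1 + η with hl
  have hl1 : 1 < l := by linarith
  have hlog0 : 0 < Real.log l := Real.log_pos hl1
  set D := η * δ / K with hD
  have hD0 : 0 < D := by positivity
  set c0 := η / (K * l) with hc0
  have hc00 : 0 < c0 := by positivity
  set q := (1 - Real.exp (-(β * δ))) ^ 2 with hq
  have hexp1 : Real.exp (-(β * δ)) < 1 := Real.exp_zero ▸ Real.exp_lt_exp.mpr (by
    have : 0 < β * δ := by positivity
    linarith)
  have hexp0 := Real.exp_pos (-(β * δ))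
  have hq0 : 0 < q := by
    have : 0 < 1 - Real.exp (-(β * δ)) := by linarith
    positivity
  have hq1 : q ≤ 1 := by
    rw [hq]
    nlinarith
  refine ⟨ε, ⟨hε0, by linarith⟩, 4 / Real.log l + 2, by positivity, ?_⟩
  have hlogt : Tendsto (fun N : ℕ => Real.log N) atTop atTop :=
    Real.tendsto_log_atTop.comp tendsto_natCast_atTop_atTop
  have hcast : Tendsto (fun N : ℕ => (N : ℝ)) atTop atTop := tendsto_natCast_atTop_atTop
  have ev1 : ∀ᶠ N : ℕ in atTop, Real.log N ^ (-α) ≤ ε :=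
    ((tendsto_rpow_neg_atTop hα0).comp hlogt).eventually_le_const hε0
  have ev2 : ∀ᶠ N : ℕ in atTop, (N : ℝ) ^ (-(1 - γ)) ≤ δ :=
    ((tendsto_rpow_neg_atTop (by linarith : 0 < 1 - γ)).comp hcast).eventually_le_const hδ0
  have hlow : Tendsto (fun N : ℕ => 1 - ((N : ℝ) * Real.exp (1 - c0 * Real.log N ^ (α * γ)) +
      (N : ℝ) * (N * Real.exp (-(q * ε * N))))) atTop (nhds 1) := by
    have := ((err1_tendsto c0 (α * γ) hc00 hτ).add (err2_tendsto (q * ε) (by positivity))).const_sub 1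
    simpa using this
  refine tendsto_of_tendsto_of_tendsto_of_le_of_le' hlow tendsto_const_nhds ?_ ?_
  swap
  · refine Eventually.of_forall fun N => ?_
    obtain ⟨_, hp0, hp1⟩ := snr_facts β γ hβ0.le N
    unfold snrProb
    rw [graphProb_eq]
    calc _ ≤ Ex (snrEdgeProb β γ N) N (fun _ => 1) := Ex_mono _ hp0 hp1 fun G => ind_le_one _
      _ = 1 := Ex_one _ _
  filter_upwards [ev1, ev2, hlogt.eventually_ge_atTop 1, hcast.eventually_ge_atTop (1 / ε),
    hcast.eventually_ge_atTop D, hcast.eventually_ge_atTop (1 / D), eventually_ge_atTop 1]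
    with N hN1 hN2 hN3 hN4 hN5 hN6 hN7
  have hNp : (0 : ℝ) < N := by exact_mod_cast hN7
  have hεN : 1 ≤ ε * N := by
    rw [div_le_iff₀ hε0] at hN4; linarith
  have hDN : 1 ≤ D * N := by
    rw [div_le_iff₀ hD0] at hN6; linarith
  obtain ⟨hp, hp0, hp1⟩ := snr_facts β γ hβ0.le N
  obtain ⟨k, hk1, hk2⟩ := exists_nat_pow_near hDN hl1
  set M := δ * N with hM
  have hM0 : 0 < M := by positivity
  set L := Finset.univ.filter (fun v : Fin N => ⌊ε * (N : ℝ)⌋₊ < (v : ℕ) + 1 ∧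
        (v : ℕ) + 1 ≤ ⌊ρ * (N : ℝ)⌋₊) with hL
  set R := Finset.univ.filter (fun v : Fin N => ⌊ρ * (N : ℝ)⌋₊ < (v : ℕ) + 1) with hR
  set S := Finset.univ.filter (fun v : Fin N => (v : ℕ) + 1 ≤ ⌊(N : ℝ) * Real.log N ^ (-α)⌋₊)
    with hS
  have hfl : ⌊ε * (N : ℝ)⌋₊ ≤ ⌊ρ * (N : ℝ)⌋₊ := Nat.floor_le_floor (by
    have : ε ≤ ρ := by rw [hρ]; linarith
    gcongr)
  have hfl2 : ⌊(N : ℝ) * Real.log N ^ (-α)⌋₊ ≤ ⌊ε * (N : ℝ)⌋₊ := Nat.floor_le_floor (by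
    rw [mul_comm]; gcongr)
  have hsum := sum_sq_bound γ β b ε ρ hβ0 hb0 hb1 hbγ hε0 (by rw [hρ]; linarith)
    (by rw [hρ]; linarith) N hεN
  have hκKM : β / N * K * M = η := by
    rw [hM, hδ]; field_simp
  have hle1 : ∀ u : Fin N, ((u : ℕ) : ℝ) + 1 ≤ N := fun u => by exact_mod_cast u.2
  have hmain := main_bound (snrEdgeProb β γ N) hp hp0 hp1
    (fun v : Fin N => ((N : ℝ) / ((v : ℕ) + 1)) ^ γ)
    (fun u => Real.one_le_rpow (by rw [le_div_iff₀ (by positivity)]; linarith [hle1 u]) hγ0.le)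
    (β / N) (by positivity) (fun a u => snr_weight β γ N a u) L R S M K η l
    (Real.log N ^ (α * γ)) hM0 hη0.le hl1.le hK0.le
    (by
      intro u hu
      have hu' := (Finset.mem_filter.mp hu).2.1
      have h2 : ε * N < ((u : ℕ) : ℝ) + 1 := by
        have := Nat.lt_of_floor_lt hu'
        exact_mod_cast this
      apply Real.rpow_le_rpow (by positivity) _ hγ0.le
      rw [div_le_div_iff₀ (by positivity) hε0]
      linarith)
    hκKM.le
    (by
      rw [hκKM]
      refine le_trans ?_ (hΛ.trans hsum)
      rw [hl]
      nlinarith [mul_nonneg hη0.le hη0.le, mul_nonneg (mul_nonneg hη0.le hη0.le) (sub_nonneg.mpr hη1),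
        mul_nonneg hη0.le (sub_nonneg.mpr hη1)])
    k
    (by
      rw [div_mul_eq_mul_div, div_le_iff₀ hM0]
      have : D * N * K = η * M := by rw [hD, hM]; field_simp
      rw [← this]
      gcongr)
    (by
      rw [Finset.disjoint_left]
      intro v h1 h2
      have h1 := (Finset.mem_filter.mp h1).2
      have h2 := (Finset.mem_filter.mp h2).2
      omega)
    (by
      rw [Finset.disjoint_left]
      intro v h1 h2
      have h1 := (Finset.mem_filter.mp h1).2
      have h2 := (Finset.mem_filter.mp h2).2
      omega)
    (by
      rw [Finset.disjoint_left]
      intro v h1 h2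
      have h1 := (Finset.mem_filter.mp h1).2
      have h2 := (Finset.mem_filter.mp h2).2
      omega)
    (by
      intro s _
      have h1 : ((N : ℝ) / ((s : ℕ) + 1)) ^ γ ≤ (N : ℝ) ^ γ := by
        apply Real.rpow_le_rpow (by positivity) _ hγ0.le
        apply div_le_self hNp.le
        have : (0 : ℝ) ≤ ((s : ℕ) : ℝ) := by positivity
        linarith
      refine h1.trans ?_
      have : (N : ℝ) ^ γ = (N : ℝ) ^ (-(1 - γ)) * N := by
        rw [← Real.rpow_add_one hNp.ne']; congr 1; ring
      rw [this, hM]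
      gcongr)
    (by
      intro s hs
      have hs' := (Finset.mem_filter.mp hs).2
      have hlp : 0 < Real.log N := by linarith
      have h1 : ((s : ℕ) : ℝ) + 1 ≤ N * Real.log N ^ (-α) := by
        have := (Nat.le_floor_iff (by positivity)).mp hs'
        exact_mod_cast this
      rw [Real.rpow_mul hlp.le]
      apply Real.rpow_le_rpow (by positivity) _ hγ0.le
      rw [le_div_iff₀ (by positivity)]
      calc Real.log N ^ α * (((s : ℕ) : ℝ) + 1) ≤ Real.log N ^ α * (N * Real.log N ^ (-α)) := by gcongr
        _ = N := by
          rw [Real.rpow_neg hlp.le]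
          have : Real.log N ^ α ≠ 0 := by positivity
          field_simp)
  unfold snrProb
  rw [graphProb_eq]
  have hlower : 1 - ((N : ℝ) * Real.exp (1 - c0 * Real.log N ^ (α * γ)) +
      (N : ℝ) * (N * Real.exp (-(q * ε * N)))) ≤
      1 - (N * Real.exp (1 - l ^ k / M * Real.log N ^ (α * γ)) +
      N * (N * (1 - (1 - Real.exp (-(β / N * M))) ^ 2) ^ R.card)) := by
    have e1 : β / N * M = β * δ := by rw [hM]; field_simp
    have e2 : c0 ≤ l ^ k / M := by
      rw [le_div_iff₀ hM0]
      have : c0 * M = D * N / l := by rw [hc0, hM, hD]; field_simp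
      rw [this, div_le_iff₀ (by linarith), ← pow_succ]
      exact hk2.le
    have e3 : ε * N ≤ R.card := by
      have h1 : N - ⌊ρ * (N : ℝ)⌋₊ ≤ R.card := by
        have h2 : (Finset.univ.filter (fun v : Fin N => (v : ℕ) < ⌊ρ * (N : ℝ)⌋₊)).card ≤
            ⌊ρ * (N : ℝ)⌋₊ := by
          have := Finset.card_le_card_of_injOn (s := Finset.univ.filter
            (fun v : Fin N => (v : ℕ) < ⌊ρ * (N : ℝ)⌋₊)) (t := Finset.range ⌊ρ * (N : ℝ)⌋₊)
            (fun v => (v : ℕ)) (by intro v hv; simpa using hv)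
            (by intro u _ v _ h; exact Fin.ext h)
          simpa using this
        have h3 := Finset.card_filter_add_card_filter_not (s := (Finset.univ : Finset (Fin N)))
          (fun v : Fin N => (v : ℕ) < ⌊ρ * (N : ℝ)⌋₊)
        have h4 : Finset.univ.filter (fun v : Fin N => ¬ (v : ℕ) < ⌊ρ * (N : ℝ)⌋₊) = R := by
          rw [hR]
          apply Finset.filter_congr
          intro v _
          omega
        rw [h4, Finset.card_univ, Fintype.card_fin] at h3
        omega
      have h5 : ((⌊ρ * (N : ℝ)⌋₊ : ℕ) : ℝ) ≤ ρ * N := Nat.floor_le (by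
        have : 0 ≤ ρ := by rw [hρ]; linarith
        positivity)
      have h6 : (N : ℝ) ≤ R.card + (⌊ρ * (N : ℝ)⌋₊ : ℕ) := by
        have : N ≤ R.card + ⌊ρ * (N : ℝ)⌋₊ := by omega
        exact_mod_cast this
      rw [hρ] at h5 h6
      linarith
    have e4 : (1 - q) ^ R.card ≤ Real.exp (-(q * ε * N)) := by
      calc (1 - q) ^ R.card ≤ (Real.exp (-q)) ^ R.card := by
            have := Real.add_one_le_exp (-q)
            exact pow_le_pow_left₀ (by linarith) (by linarith) _
        _ = Real.exp (-(q * R.card)) := by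
            rw [← Real.exp_nat_mul]; congr 1; ring
        _ ≤ _ := by
            apply Real.exp_le_exp.mpr
            nlinarith [mul_le_mul_of_nonneg_left e3 hq0.le]
    rw [e1, ← hq]
    have hlp : 0 ≤ Real.log N ^ (α * γ) := by
      have : 0 ≤ Real.log N := by linarith
      positivity
    gcongr
  refine hlower.trans (hmain.trans ?_)
  refine Ex_mono _ hp0 hp1 fun G => ?_
  by_cases hG : ∀ s ∈ S, ∀ t ∈ S, ∃ q : G.Walk s t, q.IsPath ∧ q.length ≤ 2 * k + 2 ∧
      ∀ v ∈ q.support, v ≠ s → v ≠ t → v ∈ L ∪ R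
  swap
  · rw [ind_false hG]; exact ind_nonneg _
  rw [ind_true hG, ind_true]
  intro s t hs ht
  obtain ⟨w, hw1, hw2, hw3⟩ := hG s (Finset.mem_filter.mpr ⟨Finset.mem_univ _, hs⟩) t (Finset.mem_filter.mpr ⟨Finset.mem_univ _, ht⟩)
  refine ⟨w, hw1, ?_, ?_⟩
  · have hkk : (k : ℝ) * Real.log l ≤ 2 * Real.log N := by
      have h1 : l ^ k ≤ (N : ℝ) ^ 2 := by
        refine hk1.trans ?_
        rw [sq]; gcongr
      have h2 := Real.log_le_log (by positivity) h1
      rw [Real.log_pow, Real.log_pow] at h2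
      exact_mod_cast h2
    have hk3 : (k : ℝ) ≤ 2 * Real.log N / Real.log l := by
      rw [le_div_iff₀ hlog0]; exact hkk
    have hw2' : (w.length : ℝ) ≤ 2 * k + 2 := by exact_mod_cast hw2
    calc (w.length : ℝ) ≤ 2 * (2 * Real.log N / Real.log l) + 2 * Real.log N := by linarith
      _ = _ := by ring
  · intro v hv hvs hvt
    have := hw3 v hv hvs hvt
    rcases Finset.mem_union.mp this with h | h
    · exact (Finset.mem_filter.mp h).2.1
    · exact lt_of_le_of_lt hfl (Finset.mem_filter.mp h).2
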